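/- arXiv:1911.01402 — 8 statements merged into one kernel-verified Lean document; each statement's English description precedes it below -/
import Mathlib

section
/- Sequential composition of MinID-LDP: Let D be a type and, for i = 1,…,k, let P_i : D → R_i → ℝ be transition probabilities with P_i x y ≥ 0 for all x, y, and let ε^{(i)} : D → ℝ be privacy budget functions. Suppose each P_i satisfies ε^{(i)}-MinID-LDP, i.e., P_i x y ≤ exp(min(ε^{(i)} x, ε^{(i)} x')) · P_i x' y for all x, x' ∈ D and y ∈ R_i. Then the combined mechanism P(x, (y_1,…,y_k)) = ∏_{i=1}^k P_i x y_i satisfies (∑_i ε^{(i)})-MinID-LDP, i.e., ∏_{i=1}^k P_i x y_i ≤ exp(min(∑_{i=1}^k ε^{(i)} x, ∑_{i=1}^k ε^{(i)} x')) · ∏_{i=1}^k P_i x' y_i for all x, x' ∈ D and all tuples (y_1,…,y_k). -/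
theorem minid_ldp_sequential_composition
    {D : Type*} {k : ℕ} {R : Fin k → Type*}
    (P : (i : Fin k) → D → R i → ℝ) (ε : Fin k → D → ℝ)
    (hnonneg : ∀ i x y, 0 ≤ P i x y)
    (hMinID : ∀ i (x x' : D) (y : R i),
      P i x y ≤ Real.exp (min (ε i x) (ε i x')) * P i x' y)
    (x x' : D) (y : (i : Fin k) → R i) :
    (∏ i, P i x (y i)) ≤
      Real.exp (min (∑ i, ε i x) (∑ i, ε i x')) * ∏ i, P i x' (y i) := by
  calc ∏ i, P i x (y i)
      ≤ ∏ i, Real.exp (min (ε i x) (ε i x')) * P i x' (y i) :=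
        Finset.prod_le_prod (fun i _ => hnonneg i x (y i)) (fun i _ => hMinID i x x' (y i))
    _ = Real.exp (∑ i, min (ε i x) (ε i x')) * ∏ i, P i x' (y i) := by
        rw [Finset.prod_mul_distrib, Real.exp_sum]
    _ ≤ Real.exp (min (∑ i, ε i x) (∑ i, ε i x')) * ∏ i, P i x' (y i) := by
        -- A sum of minima is at most the minimum of the sums.
        refine mul_le_mul_of_nonneg_right (Real.exp_le_exp.mpr (le_min ?_ ?_))
          (Finset.prod_nonneg fun i _ => hnonneg i x' (y i))
        · exact Finset.sum_le_sum fun i _ => min_le_left _ _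
        · exact Finset.sum_le_sum fun i _ => min_le_right _ _
end

section
/- MinID-LDP implies LDP with budget min{max E, 2·min E} (second part of the relationship lemma): Let D be a nonempty finite type, P : D → R → ℝ transition probabilities with P x y ≥ 0 for all x, y, and ε : D → ℝ privacy budgets. Write ε_min = min_{x∈D} ε x and ε_max = max_{x∈D} ε x. If P satisfies ε-MinID-LDP, i.e., P x y ≤ exp(min(ε x, ε x')) · P x' y for all x, x', y, then P satisfies min(ε_max, 2·ε_min)-LDP, i.e., P x y ≤ exp(min(ε_max, 2·ε_min)) · P x' y for all x, x' ∈ D and all y ∈ R. -/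
theorem minid_ldp_implies_ldp
    {D : Type*} [Fintype D] [Nonempty D] {R : Type*}
    (P : D → R → ℝ) (ε : D → ℝ)
    (hnonneg : ∀ x y, 0 ≤ P x y)
    (hMinID : ∀ (x x' : D) (y : R),
      P x y ≤ Real.exp (min (ε x) (ε x')) * P x' y) :
    ∀ (x x' : D) (y : R),
      P x y ≤
        Real.exp (min (Finset.univ.sup' Finset.univ_nonempty ε)
          (2 * Finset.univ.inf' Finset.univ_nonempty ε)) * P x' y := by
  intro x x' y
  rcases min_choice (Finset.univ.sup' Finset.univ_nonempty ε)
    (2 * Finset.univ.inf' Finset.univ_nonempty ε) with h | h <;> rw [h]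
  · refine (hMinID x x' y).trans
      (mul_le_mul_of_nonneg_right (Real.exp_le_exp.mpr ?_) (hnonneg x' y))
    exact (min_le_left _ _).trans (Finset.le_sup' ε (Finset.mem_univ x))
  · -- Pass through an input `m` of minimal budget: each of `x → m` and `m → x'` costs `ε m`.
    obtain ⟨m, -, hm⟩ := Finset.exists_mem_eq_inf' Finset.univ_nonempty ε
    rw [hm]
    calc P x y ≤ Real.exp (ε m) * P m y :=
          (hMinID x m y).trans (mul_le_mul_of_nonneg_right
            (Real.exp_le_exp.mpr (min_le_right _ _)) (hnonneg m y))
      _ ≤ Real.exp (ε m) * (Real.exp (ε m) * P x' y) := by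
          refine mul_le_mul_of_nonneg_left ?_ (Real.exp_pos _).le
          exact (hMinID m x' y).trans (mul_le_mul_of_nonneg_right
            (Real.exp_le_exp.mpr (min_le_left _ _)) (hnonneg x' y))
      _ = Real.exp (2 * ε m) * P x' y := by rw [two_mul, Real.exp_add, mul_assoc]
end

section
/- Upper bound on prior-posterior privacy leakage under MinID-LDP: Let D be a nonempty finite type, P : D → R → ℝ transition probabilities with P x y ≥ 0 for all x, y, ε : D → ℝ privacy budgets, and π : D → ℝ a prior distribution with π x ≥ 0 for all x and ∑_{x∈D} π x = 1. Write ε_min = min_{x∈D} ε x. If P satisfies ε-MinID-LDP, i.e., P x y ≤ exp(min(ε x, ε x')) · P x' y for all x, x', y, then for every x ∈ D and every y ∈ R: ∑_{x'∈D} π x' · P x' y ≤ exp(min(ε x, 2·ε_min)) · P x y. (This says the ratio Pr(x)/Pr(x|y) = (∑_{x'} π(x') Pr(y|x')) / Pr(y|x) is at most exp(min(ε_x, 2·min E)).) -/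
/-!
The left-hand side is a `π`-average of the values `P x' y`, so it suffices to bound each of them.
The factor `exp (ε x)` comes from comparing `x'` with `x` directly; the factor
`exp (2 * ε_min)` comes from comparing `x'` with a minimizer of `ε`, and that minimizer with `x`.
-/

theorem minid_ldp_leakage_upper_bound
    {D : Type*} [Fintype D] [Nonempty D] {R : Type*}
    (P : D → R → ℝ) (ε : D → ℝ) (π : D → ℝ)
    (hnonneg : ∀ x y, 0 ≤ P x y)
    (hπnonneg : ∀ x, 0 ≤ π x)
    (hπsum : ∑ x : D, π x = 1)
    (hMinID : ∀ (x x' : D) (y : R),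
      P x y ≤ Real.exp (min (ε x) (ε x')) * P x' y) :
    ∀ (x : D) (y : R),
      (∑ x' : D, π x' * P x' y) ≤
        Real.exp (min (ε x) (2 * Finset.univ.inf' Finset.univ_nonempty ε)) * P x y := by
  intro x y
  obtain ⟨m, -, hm⟩ := Finset.exists_mem_eq_inf' Finset.univ_nonempty ε
  rw [hm]
  -- The sum is a convex combination, so it suffices to bound each `P x' y`.
  have key : ∀ x', P x' y ≤ Real.exp (min (ε x) (2 * ε m)) * P x y := by
    intro x'
    rcases min_choice (ε x) (2 * ε m) with h | h <;> rw [h]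
    · exact (hMinID x' x y).trans
        (mul_le_mul_of_nonneg_right (Real.exp_le_exp.2 (min_le_right _ _)) (hnonneg x y))
    · -- Pass through the minimizer `m`: each of `x' → m` and `m → x` costs a factor `exp (ε m)`.
      calc P x' y ≤ Real.exp (ε m) * P m y := (hMinID x' m y).trans
            (mul_le_mul_of_nonneg_right (Real.exp_le_exp.2 (min_le_right _ _)) (hnonneg m y))
        _ ≤ Real.exp (ε m) * (Real.exp (ε m) * P x y) :=
            mul_le_mul_of_nonneg_left ((hMinID m x y).trans
              (mul_le_mul_of_nonneg_right (Real.exp_le_exp.2 (min_le_left _ _)) (hnonneg x y)))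
              (Real.exp_pos _).le
        _ = Real.exp (2 * ε m) * P x y := by rw [two_mul, Real.exp_add, mul_assoc]
  calc ∑ x', π x' * P x' y
      ≤ ∑ x', π x' * (Real.exp (min (ε x) (2 * ε m)) * P x y) :=
        Finset.sum_le_sum fun x' _ => mul_le_mul_of_nonneg_left (key x') (hπnonneg x')
    _ = Real.exp (min (ε x) (2 * ε m)) * P x y := by rw [← Finset.sum_mul, hπsum, one_mul]
end

section
/- Lower bound on prior-posterior privacy leakage under MinID-LDP: Let D be a nonempty finite type, P : D → R → ℝ transition probabilities with P x y ≥ 0 for all x, y, ε : D → ℝ privacy budgets, and π : D → ℝ a prior distribution with π x ≥ 0 for all x and ∑_{x∈D} π x = 1. Write ε_min = min_{x∈D} ε x. If P satisfies ε-MinID-LDP, i.e., P x y ≤ exp(min(ε x, ε x')) · P x' y for all x, x', y, then for every x ∈ D and every y ∈ R: P x y ≤ exp(min(ε x, 2·ε_min)) · ∑_{x'∈D} π x' · P x' y. (This says the ratio Pr(x)/Pr(x|y) = (∑_{x'} π(x') Pr(y|x')) / Pr(y|x) is at least exp(−min(ε_x, 2·min E)).) -/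
/-!
The bound already holds with the average `∑ π x' * P x' y` replaced by each single `P x' y`;
averaging over the prior then preserves it. For the exponent `ε x` the pointwise bound is immediate
from the MinID-LDP condition. For the exponent `2 * ε_min`, apply the condition twice, going from
`x` to an input `x₀` attaining the minimal budget and from `x₀` to `x'`; each step costs at most a
factor `exp ε_min`.
-/

theorem minid_ldp_leakage_lower_bound
    {D : Type*} [Fintype D] [Nonempty D] {R : Type*}
    (P : D → R → ℝ) (ε : D → ℝ) (π : D → ℝ)
    (hnonneg : ∀ x y, 0 ≤ P x y)
    (hπnonneg : ∀ x, 0 ≤ π x)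
    (hπsum : ∑ x : D, π x = 1)
    (hMinID : ∀ (x x' : D) (y : R),
      P x y ≤ Real.exp (min (ε x) (ε x')) * P x' y) :
    ∀ (x : D) (y : R),
      P x y ≤
        Real.exp (min (ε x) (2 * Finset.univ.inf' Finset.univ_nonempty ε)) *
          ∑ x' : D, π x' * P x' y := by
  intro x y
  set m := Finset.univ.inf' Finset.univ_nonempty ε with hm
  obtain ⟨x₀, -, hx₀⟩ := Finset.exists_mem_eq_inf' Finset.univ_nonempty ε
  rw [← hm] at hx₀
  have key : ∀ x', P x y ≤ Real.exp (min (ε x) (2 * m)) * P x' y := by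
    intro x'
    rcases min_choice (ε x) (2 * m) with h | h <;> rw [h]
    · exact (hMinID x x' y).trans (mul_le_mul_of_nonneg_right
        (Real.exp_le_exp.2 (min_le_left _ _)) (hnonneg x' y))
    · calc P x y ≤ Real.exp (min (ε x) (ε x₀)) * P x₀ y := hMinID x x₀ y
        _ ≤ Real.exp m * P x₀ y := mul_le_mul_of_nonneg_right
            (Real.exp_le_exp.2 (hx₀ ▸ min_le_right _ _)) (hnonneg x₀ y)
        _ ≤ Real.exp m * (Real.exp m * P x' y) := by
            refine mul_le_mul_of_nonneg_left ?_ (Real.exp_pos m).le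
            exact (hMinID x₀ x' y).trans (mul_le_mul_of_nonneg_right
              (Real.exp_le_exp.2 (hx₀ ▸ min_le_left _ _)) (hnonneg x' y))
        _ = Real.exp (2 * m) * P x' y := by
            rw [two_mul, Real.exp_add, mul_assoc]
  calc P x y = ∑ x' : D, π x' * P x y := by rw [← Finset.sum_mul, hπsum, one_mul]
    _ ≤ ∑ x' : D, π x' * (Real.exp (min (ε x) (2 * m)) * P x' y) :=
        Finset.sum_le_sum fun x' _ => mul_le_mul_of_nonneg_left (key x') (hπnonneg x')
    _ = Real.exp (min (ε x) (2 * m)) * ∑ x' : D, π x' * P x' y := by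
        rw [Finset.mul_sum]
        exact Finset.sum_congr rfl fun x' _ => mul_left_comm _ _ _
end

section
/- Ratio bound for the Input-Discriminative Unary Encoding (IDUE) mechanism: Let m ≥ 2 and let a, b : Fin m → ℝ with 0 < b k < a k < 1 for all k. For an item i ∈ Fin m, the encoded input is the one-hot vector v_i, and the output distribution of IDUE on inputs v_i assigns to each y ∈ Fin m → {0,1} the probability Q_i(y) = ∏_{k} p_k^{y_k} (1−p_k)^{1−y_k} where p_k = a_k if k = i and p_k = b_k otherwise. Then for all i ≠ j in Fin m and every y ∈ Fin m → {0,1}: Q_i(y) · b_i · (1 − a_j) ≤ a_i · (1 − b_j) · Q_j(y), i.e., Q_i(y)/Q_j(y) ≤ (a_i (1 − b_j)) / (b_i (1 − a_j)). -/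
/-!
The distributions `Q_i` and `Q_j` differ only in the factors of bits `i` and `j`, so the common
product over the remaining bits cancels from the ratio. Bit `i` contributes a ratio of at most
`a i / b i` (attained at `y i = 1`) and bit `j` a ratio of at most `(1 - b j) / (1 - a j)`
(attained at `y j = 0`); both bounds use `b < a`.
-/

/-- Output probability of IDUE given one-hot input `v_i`: each bit `k` is 1
with probability `a k` if `k = i` and `b k` otherwise. -/
noncomputable def idueProb {m : ℕ} (a b : Fin m → ℝ) (i : Fin m)
    (y : Fin m → Bool) : ℝ :=
  ∏ k, if y k then (if k = i then a k else b k) else (1 - if k = i then a k else b k)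

/-- Splits off the factors of bits `i` and `j`. The remaining product involves only `b`, hence
it is also the one that occurs in `Q_j`. -/
lemma idueProb_eq_mul {m : ℕ} (a b : Fin m → ℝ) {i j : Fin m} (hij : i ≠ j)
    (y : Fin m → Bool) :
    idueProb a b i y = (if y i then a i else 1 - a i) * (if y j then b j else 1 - b j) *
      ∏ k ∈ (Finset.univ.erase i).erase j, (if y k then b k else 1 - b k) := by
  unfold idueProb
  rw [← Finset.mul_prod_erase _ _ (Finset.mem_univ i),
    ← Finset.mul_prod_erase _ _ (Finset.mem_erase.2 ⟨hij.symm, Finset.mem_univ j⟩), ← mul_assoc]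
  congr 1
  · simp [hij.symm]
  · refine Finset.prod_congr rfl fun k hk => ?_
    have hki : k ≠ i := (Finset.mem_erase.1 (Finset.mem_erase.1 hk).2).1
    simp [hki]

theorem idue_ratio_bound {m : ℕ} (hm : 2 ≤ m) (a b : Fin m → ℝ)
    (hb : ∀ k, 0 < b k) (hba : ∀ k, b k < a k) (ha : ∀ k, a k < 1)
    (i j : Fin m) (hij : i ≠ j) (y : Fin m → Bool) :
    idueProb a b i y * (b i * (1 - a j)) ≤
      (a i * (1 - b j)) * idueProb a b j y := by
  rw [idueProb_eq_mul a b hij y, idueProb_eq_mul a b hij.symm y,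
    Finset.erase_right_comm (a := j) (b := i)]
  set R := ∏ k ∈ (Finset.univ.erase i).erase j, (if y k then b k else 1 - b k)
  have hR : 0 ≤ R := Finset.prod_nonneg fun k _ => by
    split_ifs <;> linarith [hb k, hba k, ha k]
  have hi : (if y i then a i else 1 - a i) * b i ≤ a i * (if y i then b i else 1 - b i) := by
    split_ifs <;> nlinarith [hba i]
  have hj : (if y j then b j else 1 - b j) * (1 - a j) ≤
      (1 - b j) * (if y j then a j else 1 - a j) := by
    split_ifs <;> nlinarith [hba j]
  have hj0 : 0 ≤ (if y j then b j else 1 - b j) * (1 - a j) :=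
    mul_nonneg (by split_ifs <;> linarith [hb j, hba j, ha j]) (by linarith [ha j])
  have hi0 : 0 ≤ a i * (if y i then b i else 1 - b i) :=
    mul_nonneg (by linarith [hb i, hba i]) (by split_ifs <;> linarith [hb i, hba i, ha i])
  have h := mul_le_mul_of_nonneg_right (mul_le_mul hi hj hj0 hi0) hR
  linarith
end

section
/- Sharpness of the IDUE ratio bound: Let m ≥ 2 and let a, b : Fin m → ℝ with 0 < b k < a k < 1 for all k. With Q_i(y) = ∏_{k} p_k^{y_k}(1−p_k)^{1−y_k} (p_k = a_k if k = i, p_k = b_k otherwise) denoting the output probabilities of IDUE on one-hot input v_i, for all i ≠ j there exists y ∈ Fin m → {0,1} (namely any y with y_i = 1 and y_j = 0) such that Q_i(y) · b_i · (1 − a_j) = a_i · (1 − b_j) · Q_j(y); in particular the bound Q_i(y)/Q_j(y) ≤ (a_i(1−b_j))/(b_i(1−a_j)) is attained. -/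
/-- The contributions of bits `i` and `j` split off from the output probability. -/
lemma idueProb_eq_mul_mul_prod {m : ℕ} (a b : Fin m → ℝ) (l : Fin m) (y : Fin m → Bool)
    {i j : Fin m} (hij : i ≠ j) (hi : y i = true) (hj : y j = false) :
    idueProb a b l y = (if i = l then a i else b i) * ((1 - if j = l then a j else b j) *
      ∏ k ∈ (Finset.univ.erase i).erase j,
        if y k then (if k = l then a k else b k) else (1 - if k = l then a k else b k)) := by
  unfold idueProb
  rw [← Finset.mul_prod_erase Finset.univ _ (Finset.mem_univ i),
    ← Finset.mul_prod_erase (Finset.univ.erase i) _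
      (Finset.mem_erase.mpr ⟨hij.symm, Finset.mem_univ j⟩)]
  simp [hi, hj]

theorem idue_ratio_bound_sharp {m : ℕ} (hm : 2 ≤ m) (a b : Fin m → ℝ)
    (hb : ∀ k, 0 < b k) (hba : ∀ k, b k < a k) (ha : ∀ k, a k < 1)
    (i j : Fin m) (hij : i ≠ j) :
    ∃ y : Fin m → Bool, y i = true ∧ y j = false ∧
      idueProb a b i y * (b i * (1 - a j)) =
        (a i * (1 - b j)) * idueProb a b j y := by
  refine ⟨fun k => decide (k = i), by simp, by simp [hij.symm], ?_⟩
  rw [idueProb_eq_mul_mul_prod a b i _ hij (by simp) (by simp [hij.symm]),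
    idueProb_eq_mul_mul_prod a b j _ hij (by simp) (by simp [hij.symm])]
  -- Away from `i` and `j` both inputs have bit 0, so the remaining factors agree.
  have hrest : ∀ l, l = i ∨ l = j → ∀ y : Fin m → Bool,
      (∏ k ∈ (Finset.univ.erase i).erase j,
        if y k then (if k = l then a k else b k) else (1 - if k = l then a k else b k)) =
      ∏ k ∈ (Finset.univ.erase i).erase j, if y k then b k else 1 - b k := by
    intro l hl y
    refine Finset.prod_congr rfl fun k hk => ?_
    have hkl : k ≠ l := by
      simp only [Finset.mem_erase] at hk
      rcases hl with rfl | rfl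
      · exact hk.2.1
      · exact hk.1
    simp only [if_neg hkl]
  rw [hrest i (Or.inl rfl), hrest j (Or.inr rfl), if_pos rfl, if_pos rfl,
    if_neg hij, if_neg hij.symm]
  ring
end

section
/- Convexity of the opt1 objective: Let t ≥ 1 and m_1,…,m_t ≥ 0 be real constants. The function f : (ℝ^t) → ℝ defined by f(τ) = ∑_{i=1}^t m_i · exp(τ_i)/(exp(τ_i) − 1)² is convex on the set {τ ∈ ℝ^t : τ_i > 0 for all i}. In particular, the single-variable function g(τ) = exp(τ)/(exp(τ) − 1)² is convex on (0, ∞). -/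
/-!
For `τ > 0`, differentiating the geometric series in `r = exp (-τ)` gives
`exp τ / (exp τ - 1) ^ 2 = r / (1 - r) ^ 2 = ∑ n, n * exp (-τ) ^ n`.
Each term `n * exp (-n τ)` is convex in `τ`, so the sum is convex on `(0, ∞)`. The objective is a
nonnegative combination of this function composed with the coordinate projections.
-/

theorem hasSum_exp_div_sq {x : ℝ} (hx : 0 < x) :
    HasSum (fun n : ℕ => (n : ℝ) * Real.exp (n * -x))
      (Real.exp x / (Real.exp x - 1) ^ 2) := by
  have hr : ‖Real.exp (-x)‖ < 1 := by
    rw [Real.norm_eq_abs, abs_of_pos (Real.exp_pos _)]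
    exact Real.exp_lt_one_iff.2 (by linarith)
  have h := hasSum_coe_mul_geometric_of_norm_lt_one hr
  have he : Real.exp x - 1 ≠ 0 := by
    have := Real.one_lt_exp_iff.2 hx
    linarith
  have hval : Real.exp (-x) / (1 - Real.exp (-x)) ^ 2 = Real.exp x / (Real.exp x - 1) ^ 2 := by
    have h0 := Real.exp_ne_zero x
    have h1 : 1 - Real.exp (-x) = (Real.exp x - 1) / Real.exp x := by
      rw [Real.exp_neg]
      field_simp
    rw [h1, Real.exp_neg]
    field_simp
  rw [hval] at h
  simpa only [Real.exp_nat_mul] using h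

theorem convexOn_exp_div_sq :
    ConvexOn ℝ (Set.Ioi (0 : ℝ)) (fun τ : ℝ => Real.exp τ / (Real.exp τ - 1) ^ 2) := by
  refine ⟨convex_Ioi 0, fun x hx y hy a b ha hb hab => ?_⟩
  have hz : 0 < a • x + b • y := convex_Ioi (0 : ℝ) hx hy ha hb hab
  refine hasSum_le (fun n => ?_) (hasSum_exp_div_sq hz)
    (((hasSum_exp_div_sq hx).mul_left a).add ((hasSum_exp_div_sq hy).mul_left b))
  have h := convexOn_exp.2 (Set.mem_univ ((n : ℝ) * -x)) (Set.mem_univ ((n : ℝ) * -y)) ha hb hab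
  simp only [smul_eq_mul] at h ⊢
  have harg : (n : ℝ) * -(a * x + b * y) = a * (n * -x) + b * (n * -y) := by ring
  rw [harg]
  have := mul_le_mul_of_nonneg_left h (Nat.cast_nonneg (α := ℝ) n)
  linarith

theorem opt1_objective_convex {t : ℕ} (ht : 1 ≤ t) (m : Fin t → ℝ)
    (hm : ∀ i, 0 ≤ m i) :
    ConvexOn ℝ {τ : Fin t → ℝ | ∀ i, 0 < τ i}
      (fun τ : Fin t → ℝ =>
        ∑ i, m i * Real.exp (τ i) / (Real.exp (τ i) - 1) ^ 2) ∧
    ConvexOn ℝ (Set.Ioi (0 : ℝ))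
      (fun τ : ℝ => Real.exp τ / (Real.exp τ - 1) ^ 2) := by
  refine ⟨⟨fun x hx y hy a b ha hb hab i => ?_, fun x hx y hy a b ha hb hab => ?_⟩,
    convexOn_exp_div_sq⟩
  · exact convex_Ioi (0 : ℝ) (hx i) (hy i) ha hb hab
  · simp only [smul_eq_mul, Finset.mul_sum, ← Finset.sum_add_distrib]
    refine Finset.sum_le_sum fun i _ => ?_
    have h := mul_le_mul_of_nonneg_left
      (convexOn_exp_div_sq.2 (hx i) (hy i) ha hb hab) (hm i)
    simp only [smul_eq_mul, Pi.add_apply, Pi.smul_apply, mul_div_assoc] at h ⊢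
    linarith
end

section
/- Convexity of the opt2 objective: Let t ≥ 1 and m_1,…,m_t ≥ 0 be real constants. The function f : (ℝ^t) → ℝ defined by f(b) = ∑_{i=1}^t m_i · b_i·(1 − b_i)/(1/2 − b_i)² is convex on the set {b ∈ ℝ^t : 0 < b_i < 1/2 for all i}. In particular, the single-variable function h(b) = b(1−b)/(1/2 − b)² is convex on (0, 1/2). -/
/-!
Since `b (1 - b) = 1/4 - (1/2 - b)²`, the one-variable function equals
`(1/2 - b)⁻² / 4 - 1` on `(0, 1/2)`. It is therefore convex, because `x ↦ x⁻²` is convex on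
`(0, ∞)` and `b ↦ 1/2 - b` is affine. The objective is a nonnegative combination of copies of
this function applied to the coordinates, which gives the multivariate claim.
-/

lemma opt2_term_eq {b : ℝ} (hb : b < 1 / 2) :
    b * (1 - b) / (1 / 2 - b) ^ 2 = (1 / 2 - b) ^ (-2 : ℤ) / 4 - 1 := by
  have h : (1 / 2 - b) ≠ 0 := by linarith
  have hz : (1 / 2 - b) ^ (-2 : ℤ) = ((1 / 2 - b) ^ 2)⁻¹ := by
    rw [zpow_neg]; norm_cast
  rw [hz, eq_sub_iff_add_eq, div_add_one (pow_ne_zero 2 h), inv_eq_one_div, div_div,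
    div_eq_div_iff (pow_ne_zero 2 h) (by positivity)]
  ring

lemma opt2_term_convex :
    ConvexOn ℝ (Set.Ioo (0 : ℝ) (1 / 2)) (fun b : ℝ => b * (1 - b) / (1 / 2 - b) ^ 2) := by
  refine ⟨convex_Ioo _ _, fun x hx y hy a c ha hc hac => ?_⟩
  have hz := convex_Ioo (0 : ℝ) (1 / 2) hx hy ha hc hac
  have key := (convexOn_zpow (𝕜 := ℝ) (-2)).2 (x := 1 / 2 - x) (y := 1 / 2 - y)
    (Set.mem_Ioi.2 (sub_pos.2 hx.2)) (Set.mem_Ioi.2 (sub_pos.2 hy.2)) ha hc hac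
  have haff : a • (1 / 2 - x) + c • (1 / 2 - y) = 1 / 2 - (a • x + c • y) := by
    simp only [smul_eq_mul]
    linear_combination (1 / 2 : ℝ) * hac
  rw [haff] at key
  beta_reduce
  rw [opt2_term_eq hx.2, opt2_term_eq hy.2, opt2_term_eq hz.2]
  simp only [smul_eq_mul] at key ⊢
  linarith

theorem opt2_objective_convex {t : ℕ} (ht : 1 ≤ t) (m : Fin t → ℝ)
    (hm : ∀ i, 0 ≤ m i) :
    ConvexOn ℝ {b : Fin t → ℝ | ∀ i, 0 < b i ∧ b i < 1 / 2}
      (fun b : Fin t → ℝ =>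
        ∑ i, m i * (b i * (1 - b i)) / (1 / 2 - b i) ^ 2) ∧
    ConvexOn ℝ (Set.Ioo (0 : ℝ) (1 / 2))
      (fun b : ℝ => b * (1 - b) / (1 / 2 - b) ^ 2) := by
  refine ⟨⟨fun x hx y hy a c ha hc hac i => convex_Ioo (0 : ℝ) (1 / 2) (hx i) (hy i) ha hc hac,
    fun x hx y hy a c ha hc hac => ?_⟩, opt2_term_convex⟩
  simp only [smul_eq_mul, Finset.mul_sum, ← Finset.sum_add_distrib, mul_div_assoc]
  refine Finset.sum_le_sum fun i _ => ?_
  have h := mul_le_mul_of_nonneg_left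
    (opt2_term_convex.2 (hx i) (hy i) ha hc hac) (hm i)
  simp only [smul_eq_mul, mul_div_assoc, Pi.add_apply, Pi.smul_apply] at h ⊢
  linarith
end
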